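/- (Risky Bellman equation, necessity) The optimal constraint decay function satisfies, for every x ∈ 𝒳, F*(x) = c(x) + (1 − c(x))·γ·inf_{u∈𝒰} F*(f(x, u)). -/

import Mathlib

/-!
Each `F^π` satisfies the fixed-policy equation `F^π x = 1` if `h x > 0`, and
`F^π x = γ F^π (f x (π x))` otherwise (`Fcdf_of_pos`, `Fcdf_of_nonpos`). Hence
`F* x ≥ γ inf_u F* (f x u)` at a safe state `x`.

For the reverse inequality one has to show `F* x ≤ γ F^π (f x u)` for all `π` and `u`
(`Fstar_le_mul_Fcdf`). Policies are stationary, so one cannot simply apply `u` first and then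
follow `π`: the trajectory may return to `x`. Policy improvement resolves this. If
`F^π x ≤ γ F^π (f x u)`, then `π` itself is a witness. Otherwise let `π'` be `π` changed to `u`
at `x`; then `F^π` is a supersolution of the equation for `π'`, so `F^{π'} ≤ F^π` by comparison
(`Fcdf_le_of_supersolution`), and `F^{π'} x = γ F^{π'} (f x u) ≤ γ F^π (f x u)`.
-/

open scoped Classical

variable {X U : Type*}

/-- Trajectory from `x` under policy `π`: `x₀ = x`, `x_{t+1} = f xₜ (π xₜ)`. -/
def traj (f : X → U → X) (π : X → U) (x : X) : ℕ → X
  | 0 => x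
  | t + 1 => f (traj f π x t) (π (traj f π x t))

/-- Constraint indicator: `c(x) = 1` if `h x > 0`, else `0`. -/
noncomputable def cInd (h : X → ℝ) (x : X) : ℝ := if h x > 0 then 1 else 0

/-- Constraint decay function `F^π(x) = γ ^ (N^π x)` with `γ ^ ∞ := 0`,
where `N^π x` is the least `t` with `h (xₜ) > 0` along the trajectory. -/
noncomputable def Fcdf (f : X → U → X) (h : X → ℝ) (γ : ℝ) (π : X → U) (x : X) : ℝ :=
  if hx : ∃ t, h (traj f π x t) > 0 then γ ^ Nat.find hx else 0

/-- Feasible region of a policy `π`. -/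
def Xfeas (f : X → U → X) (h : X → ℝ) (π : X → U) : Set X :=
  {x | ∀ t, h (traj f π x t) ≤ 0}

/-- Maximum feasible region. -/
def Xstar (f : X → U → X) (h : X → ℝ) : Set X :=
  {x | ∃ π : X → U, x ∈ Xfeas f h π}

/-- Optimal constraint decay function: infimum of `F^π` over all policies. -/
noncomputable def Fstar (f : X → U → X) (h : X → ℝ) (γ : ℝ) (x : X) : ℝ :=
  ⨅ π : X → U, Fcdf f h γ π x

/-- State-value function of a policy. -/
noncomputable def Vval (f : X → U → X) (r : X → U → ℝ) (γ : ℝ) (π : X → U) (x : X) : ℝ :=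
  ∑' t : ℕ, γ ^ t * r (traj f π x t) (π (traj f π x t))

/-- Optimal state-value function: max of `V^π` over policies whose feasible
region equals the maximum feasible region. -/
noncomputable def Vstar (f : X → U → X) (h : X → ℝ) (r : X → U → ℝ) (γ : ℝ) (x : X) : ℝ :=
  ⨆ π : {π : X → U // Xfeas f h π = Xstar f h}, Vval f r γ π.1 x

theorem traj_succ' (f : X → U → X) (π : X → U) (x : X) (t : ℕ) :
    traj f π x (t + 1) = traj f π (f x (π x)) t := by
  induction t with
  | zero => rfl
  | succ t ih => rw [traj, ih, traj]

theorem Fcdf_of_pos (f : X → U → X) (h : X → ℝ) (γ : ℝ) (π : X → U) {x : X} (hx : 0 < h x) :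
    Fcdf f h γ π x = 1 := by
  have hex : ∃ t, h (traj f π x t) > 0 := ⟨0, hx⟩
  rw [Fcdf, dif_pos hex, (Nat.find_eq_zero hex).2 hx, pow_zero]

theorem Fcdf_of_nonpos (f : X → U → X) (h : X → ℝ) (γ : ℝ) (π : X → U) {x : X} (hx : h x ≤ 0) :
    Fcdf f h γ π x = γ * Fcdf f h γ π (f x (π x)) := by
  have h0 : ¬ h (traj f π x 0) > 0 := not_lt.2 hx
  by_cases hex : ∃ t, h (traj f π (f x (π x)) t) > 0
  · have hex' : ∃ t, h (traj f π x (t + 1)) > 0 := by simpa only [traj_succ'] using hex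
    have hex'' : ∃ t, h (traj f π x t) > 0 := hex'.imp' (· + 1) fun _ ht => ht
    have hfind : Nat.find hex' = Nat.find hex :=
      Nat.find_congr' (by intro n; rw [traj_succ'])
    rw [Fcdf, Fcdf, dif_pos hex, dif_pos hex'', Nat.find_comp_succ hex'' hex' h0, hfind, pow_succ']
  · have hex'' : ¬ ∃ t, h (traj f π x t) > 0 := by
      rintro ⟨_ | t, ht⟩
      · exact h0 ht
      · exact hex ⟨t, by rwa [traj_succ'] at ht⟩
    rw [Fcdf, Fcdf, dif_neg hex, dif_neg hex'', mul_zero]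

theorem Fcdf_nonneg (f : X → U → X) (h : X → ℝ) {γ : ℝ} (hγ0 : 0 < γ) (π : X → U) (x : X) :
    0 ≤ Fcdf f h γ π x := by
  unfold Fcdf
  split_ifs <;> positivity

theorem Fcdf_le_one (f : X → U → X) (h : X → ℝ) {γ : ℝ} (hγ0 : 0 < γ) (hγ1 : γ < 1)
    (π : X → U) (x : X) : Fcdf f h γ π x ≤ 1 := by
  unfold Fcdf
  split_ifs
  · exact pow_le_one₀ hγ0.le hγ1.le
  · exact zero_le_one

theorem Fstar_le (f : X → U → X) (h : X → ℝ) {γ : ℝ} (hγ0 : 0 < γ) (π : X → U) (x : X) :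
    Fstar f h γ x ≤ Fcdf f h γ π x :=
  ciInf_le ⟨0, by rintro _ ⟨π, rfl⟩; exact Fcdf_nonneg f h hγ0 π x⟩ π

theorem Fstar_nonneg (f : X → U → X) (h : X → ℝ) {γ : ℝ} (hγ0 : 0 < γ) (x : X) :
    0 ≤ Fstar f h γ x :=
  Real.iInf_nonneg fun π => Fcdf_nonneg f h hγ0 π x

/-- Comparison principle: `F^π` is the least nonnegative supersolution of the fixed-policy
equation. Since that equation contracts by `γ`, `F^π - G` is at most `γ ^ n` for every `n`. -/
theorem Fcdf_le_of_supersolution (f : X → U → X) (h : X → ℝ) {γ : ℝ} (hγ0 : 0 < γ) (hγ1 : γ < 1)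
    (π : X → U) (G : X → ℝ) (hG0 : ∀ z, 0 ≤ G z) (hG1 : ∀ z, 0 < h z → 1 ≤ G z)
    (hG : ∀ z, h z ≤ 0 → γ * G (f z (π z)) ≤ G z) (z : X) : Fcdf f h γ π z ≤ G z := by
  have key : ∀ n : ℕ, ∀ z, Fcdf f h γ π z ≤ G z + γ ^ n := by
    intro n
    induction n with
    | zero =>
      intro z
      have h1 := Fcdf_le_one f h hγ0 hγ1 π z
      have h2 := hG0 z
      rw [pow_zero]
      linarith
    | succ n ih =>
      intro z
      rcases lt_or_ge 0 (h z) with hz | hz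
      · have h1 := hG1 z hz
        have h2 : 0 < γ ^ (n + 1) := by positivity
        rw [Fcdf_of_pos f h γ π hz]
        linarith
      · have h1 := mul_le_mul_of_nonneg_left (ih (f z (π z))) hγ0.le
        have h2 := hG z hz
        rw [Fcdf_of_nonpos f h γ π hz, pow_succ']
        linarith
  have hlim : Filter.Tendsto (fun n : ℕ => G z + γ ^ n) Filter.atTop (nhds (G z)) := by
    simpa using (tendsto_pow_atTop_nhds_zero_of_lt_one hγ0.le hγ1).const_add (G z)
  exact ge_of_tendsto' hlim fun n => key n z

/-- At a safe state, spending one step on any action and then following any policy is no better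
than the best stationary policy. -/
theorem Fstar_le_mul_Fcdf (f : X → U → X) (h : X → ℝ) {γ : ℝ} (hγ0 : 0 < γ) (hγ1 : γ < 1)
    {x : X} (hx : h x ≤ 0) (u : U) (π : X → U) :
    Fstar f h γ x ≤ γ * Fcdf f h γ π (f x u) := by
  rcases le_total (Fcdf f h γ π x) (γ * Fcdf f h γ π (f x u)) with hle | hle
  · exact (Fstar_le f h hγ0 π x).trans hle
  · have hcomp : ∀ z, Fcdf f h γ (Function.update π x u) z ≤ Fcdf f h γ π z := by
      refine Fcdf_le_of_supersolution f h hγ0 hγ1 _ _ (Fcdf_nonneg f h hγ0 π)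
        (fun z hz => (Fcdf_of_pos f h γ π hz).ge) fun z hz => ?_
      by_cases hzx : z = x
      · subst hzx
        rwa [Function.update_self]
      · rw [Function.update_of_ne hzx]
        exact (Fcdf_of_nonpos f h γ π hz).ge
    calc Fstar f h γ x ≤ Fcdf f h γ (Function.update π x u) x := Fstar_le f h hγ0 _ x
      _ = γ * Fcdf f h γ (Function.update π x u) (f x u) := by
        rw [Fcdf_of_nonpos f h γ _ hx, Function.update_self]
      _ ≤ γ * Fcdf f h γ π (f x u) := mul_le_mul_of_nonneg_left (hcomp _) hγ0.le

/-- Risky Bellman equation, necessity: the optimal CDF satisfies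
the risky Bellman equation. -/
theorem risky_bellman_necessity [Nonempty U] (f : X → U → X) (h : X → ℝ)
    (γ : ℝ) (hγ0 : 0 < γ) (hγ1 : γ < 1) (x : X) :
    Fstar f h γ x =
      cInd h x + (1 - cInd h x) * γ * ⨅ u : U, Fstar f h γ (f x u) := by
  rcases lt_or_ge 0 (h x) with hx | hx
  · have hF : ∀ π : X → U, Fcdf f h γ π x = 1 := fun π => Fcdf_of_pos f h γ π hx
    simp [Fstar, cInd, hF, hx]
  · have hc : cInd h x = 0 := if_neg (not_lt.2 hx)
    rw [hc, zero_add, sub_zero, one_mul]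
    apply le_antisymm
    · rw [Real.mul_iInf_of_nonneg hγ0.le]
      refine le_ciInf fun u => ?_
      rw [Fstar.eq_def f h γ (f x u), Real.mul_iInf_of_nonneg hγ0.le]
      exact le_ciInf fun π => Fstar_le_mul_Fcdf f h hγ0 hγ1 hx u π
    · refine le_ciInf fun π => ?_
      rw [Fcdf_of_nonpos f h γ π hx]
      have hbdd : BddBelow (Set.range fun u : U => Fstar f h γ (f x u)) :=
        ⟨0, by rintro _ ⟨u, rfl⟩; exact Fstar_nonneg f h hγ0 _⟩
      exact mul_le_mul_of_nonneg_left
        ((ciInf_le hbdd (π x)).trans (Fstar_le f h hγ0 π _)) hγ0.le
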